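/- Let E be a module over L⁰ = L⁰(𝔉,ℝ) and (E, 𝒯) a topological L⁰-module (addition continuous and module multiplication L⁰ × E → E continuous with L⁰ carrying 𝒯_c). Suppose there exists a neighborhood base 𝒰 of 0 for 𝒯 such that every U ∈ 𝒰 is L⁰-convex, L⁰-absorbent and L⁰-balanced and has the countable concatenation property, and for each U ∈ 𝒰 let p_U : E → L⁰₊ satisfy that p_U(x) is the greatest lower bound in (L⁰, ≤) of {ξ ∈ L⁰₊ : x ∈ ξU} for every x ∈ E. Then 𝒯 equals the topology induced by the family of L⁰-seminorms {p_U : U ∈ 𝒰}. -/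

import Mathlib

noncomputable section

open MeasureTheory Set Pointwise Filter Topology

namespace PaperL0

variable {Ω : Type*} [MeasurableSpace Ω]

instance commRingL0 (μ : Measure Ω) : CommRing (Ω →ₘ[μ] ℝ) :=
  { (inferInstance : AddCommGroup (Ω →ₘ[μ] ℝ)),
    (inferInstance : CommMonoid (Ω →ₘ[μ] ℝ)) with
    left_distrib := fun f g h => MeasureTheory.AEEqFun.toGerm_injective <| by
      simp [MeasureTheory.AEEqFun.mul_toGerm, MeasureTheory.AEEqFun.add_toGerm, mul_add]
    right_distrib := fun f g h => MeasureTheory.AEEqFun.toGerm_injective <| by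
      simp [MeasureTheory.AEEqFun.mul_toGerm, MeasureTheory.AEEqFun.add_toGerm, add_mul]
    zero_mul := fun f => MeasureTheory.AEEqFun.toGerm_injective <| by
      simp [MeasureTheory.AEEqFun.mul_toGerm, MeasureTheory.AEEqFun.zero_toGerm]
    mul_zero := fun f => MeasureTheory.AEEqFun.toGerm_injective <| by
      simp [MeasureTheory.AEEqFun.mul_toGerm, MeasureTheory.AEEqFun.zero_toGerm] }

variable (μ : Measure Ω)

/-- `L⁰₊`, the set of nonnegative elements of `L⁰`. -/
def Lpos : Set (Ω →ₘ[μ] ℝ) := {ξ | 0 ≤ ξ}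

/-- `L⁰₊₊`, the set of elements of `L⁰` which are `> 0` a.e. on `Ω`. -/
def Lspos : Set (Ω →ₘ[μ] ℝ) := {ξ | ∀ᵐ ω ∂μ, 0 < ξ ω}

/-- The absolute value `|ξ|` of an element of `L⁰`. -/
def aabs {μ : Measure Ω} (ξ : Ω →ₘ[μ] ℝ) : Ω →ₘ[μ] ℝ := ξ ⊔ -ξ

/-- `B_ε = {ξ ∈ L⁰ : |ξ| ≤ ε}`. -/
def ball (ε : Ω →ₘ[μ] ℝ) : Set (Ω →ₘ[μ] ℝ) := {ξ | aabs ξ ≤ ε}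

open Classical in
/-- `Ĩ_A`, the equivalence class of the indicator function of a (measurable) set `A`. -/
def ind (A : Set Ω) : Ω →ₘ[μ] ℝ :=
  if h : MeasurableSet A then
    AEEqFun.mk (A.indicator fun _ => (1 : ℝ))
      ((measurable_const.indicator h).aestronglyMeasurable)
  else 0

/-- A countable measurable partition of `Ω`. -/
def IsMeasPartition (A : ℕ → Set Ω) : Prop :=
  (∀ n, MeasurableSet (A n)) ∧ Pairwise (Function.onFun Disjoint A) ∧ (⋃ n, A n) = Set.univ

variable {E : Type*} [AddCommGroup E] [Module (Ω →ₘ[μ] ℝ) E]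

/-- `L⁰`-convexity of a subset of an `L⁰`-module. -/
def IsL0Convex (U : Set E) : Prop :=
  ∀ x ∈ U, ∀ y ∈ U, ∀ ξ : Ω →ₘ[μ] ℝ, 0 ≤ ξ → ξ ≤ 1 → ξ • x + (1 - ξ) • y ∈ U

/-- `L⁰`-absorbency of a subset of an `L⁰`-module. -/
def IsL0Absorbent (U : Set E) : Prop := ∀ x : E, ∃ ξ ∈ Lspos μ, x ∈ ξ • U

/-- `L⁰`-balancedness of a subset of an `L⁰`-module. -/
def IsL0Balanced (U : Set E) : Prop :=
  ∀ x ∈ U, ∀ ξ : Ω →ₘ[μ] ℝ, aabs ξ ≤ 1 → ξ • x ∈ U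

/-- An `L⁰`-seminorm on an `L⁰`-module. -/
structure IsL0Seminorm (p : E → Ω →ₘ[μ] ℝ) : Prop where
  nonneg : ∀ x, 0 ≤ p x
  homog : ∀ (ξ : Ω →ₘ[μ] ℝ) (x : E), p (ξ • x) = aabs ξ * p x
  triangle : ∀ x y, p (x + y) ≤ p x + p y

/-- The countable concatenation property for a subset of an `L⁰`-module. -/
def HasCCP (G : Set E) : Prop :=
  ∀ x : ℕ → E, (∀ n, x n ∈ G) → ∀ A : ℕ → Set Ω, IsMeasPartition A →
    (∃ y : E, ∀ n, ind μ (A n) • y = ind μ (A n) • x n) ∧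
      ∀ y : E, (∀ n, ind μ (A n) • y = ind μ (A n) • x n) → y ∈ G

/-- The relative countable concatenation property for a subset of an `L⁰`-module. -/
def HasRelCCP (G : Set E) : Prop :=
  ∀ x : ℕ → E, (∀ n, x n ∈ G) → ∀ A : ℕ → Set Ω, IsMeasPartition A →
    ∀ y : E, (∀ n, ind μ (A n) • y = ind μ (A n) • x n) → y ∈ G

/-- A `P`-atom of a measure. -/
def IsPAtom (A : Set Ω) : Prop :=
  MeasurableSet A ∧ 0 < μ A ∧ ∀ B, MeasurableSet B → B ⊆ A → μ B = 0 ∨ μ B = μ A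

end PaperL0

open PaperL0

theorem ind_coe {Ω : Type*} [MeasurableSpace Ω] (P : Measure Ω) {A : Set Ω}
    (hA : MeasurableSet A) : ∀ᵐ ω ∂P, (ind P A) ω = A.indicator (fun _ => (1 : ℝ)) ω := by
  unfold ind
  rw [dif_pos hA]
  exact AEEqFun.coeFn_mk _ _

theorem ind_mul_ind {Ω : Type*} [MeasurableSpace Ω] (P : Measure Ω) {A B : Set Ω}
    (hA : MeasurableSet A) (hB : MeasurableSet B) :
    ind P A * ind P B = ind P (A ∩ B) := by
  apply AEEqFun.ext
  have h := AEEqFun.coeFn_mul (ind P A) (ind P B)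
  filter_upwards [h, ind_coe P hA, ind_coe P hB, ind_coe P (hA.inter hB)] with ω h h1 h2 h3
  refine h.trans ?_
  rw [Pi.mul_apply, h1, h2, h3]
  by_cases a : ω ∈ A <;> by_cases b : ω ∈ B <;> simp [a, b]

theorem ind_empty {Ω : Type*} [MeasurableSpace Ω] (P : Measure Ω) :
    ind P (∅ : Set Ω) = 0 := by
  apply AEEqFun.ext
  filter_upwards [ind_coe P (MeasurableSet.empty), AEEqFun.coeFn_zero (μ := P) (β := ℝ)]
    with ω h h1
  rw [h]
  refine Eq.trans ?_ h1.symm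
  simp

theorem ind_full {Ω : Type*} [MeasurableSpace Ω] (P : Measure Ω) {A : Set Ω}
    (hA : MeasurableSet A) (h0 : P Aᶜ = 0) : ind P A = 1 := by
  apply AEEqFun.ext
  have h0' : ∀ᵐ ω ∂P, ω ∈ A := h0
  filter_upwards [ind_coe P hA, AEEqFun.coeFn_one (μ := P) (β := ℝ), h0']
    with ω h h1 h2
  rw [h]
  refine Eq.trans ?_ h1.symm
  simp [h2]

theorem exists_inv {Ω : Type*} [MeasurableSpace Ω] (P : Measure Ω) {ε : Ω →ₘ[P] ℝ}
    (hε : ε ∈ Lspos P) : ∃ δ : Ω →ₘ[P] ℝ, ε * δ = 1 := by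
  refine ⟨AEEqFun.compMeasurable (fun x : ℝ => x⁻¹) measurable_inv ε, ?_⟩
  apply AEEqFun.ext
  have h := AEEqFun.coeFn_mul ε (AEEqFun.compMeasurable (fun x : ℝ => x⁻¹) measurable_inv ε)
  have hε' : ∀ᵐ ω ∂P, 0 < ε ω := hε
  filter_upwards [h, AEEqFun.coeFn_compMeasurable (fun x : ℝ => x⁻¹) measurable_inv ε, hε',
    AEEqFun.coeFn_one (μ := P) (β := ℝ)] with ω h h1 h2 h3
  refine h.trans (Eq.trans ?_ h3.symm)
  rw [Pi.mul_apply, h1]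
  simp [h2.ne']

theorem ind_smul_mem {Ω : Type*} [MeasurableSpace Ω] (P : Measure Ω)
    {E : Type*} [AddCommGroup E] [Module (Ω →ₘ[P] ℝ) E] {U : Set E}
    (hbal : IsL0Balanced P U) {ξ : Ω →ₘ[P] ℝ} (hξ : 0 ≤ ξ) {u : E} (hu : u ∈ ξ • U) :
    ind P {ω | ξ ω ≤ 1} • u ∈ U := by
  obtain ⟨x, hx, rfl⟩ := hu
  have hA : MeasurableSet {ω | ξ ω ≤ 1} := measurableSet_le ξ.measurable measurable_const
  show ind P {ω | ξ ω ≤ 1} • (ξ • x) ∈ U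
  rw [smul_smul]
  apply hbal x hx
  unfold aabs
  have key : ∀ᵐ ω ∂P, (ind P {ω | ξ ω ≤ 1} * ξ : Ω →ₘ[P] ℝ) ω ∈ Set.Icc (0 : ℝ) 1 := by
    have h := AEEqFun.coeFn_mul (ind P {ω | ξ ω ≤ 1}) ξ
    have h0 := AEEqFun.coeFn_le.2 hξ
    filter_upwards [h, h0, ind_coe P hA, AEEqFun.coeFn_zero (μ := P) (β := ℝ)] with ω h h0 h1 h2
    have h' : (ind P {ω | ξ ω ≤ 1} * ξ : Ω →ₘ[P] ℝ) ω = (ind P {ω | ξ ω ≤ 1}) ω * ξ ω := h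
    rw [h', h1]
    rw [h2] at h0
    by_cases a : ξ ω ≤ 1
    · simpa [a] using h0
    · simp [a]
  generalize (ind P {ω | ξ ω ≤ 1} * ξ : Ω →ₘ[P] ℝ) = η at key
  refine sup_le ?_ ?_
  · apply AEEqFun.coeFn_le.1
    filter_upwards [key, AEEqFun.coeFn_one (μ := P) (β := ℝ)] with ω h h1
    exact h.2.trans h1.ge
  · apply AEEqFun.coeFn_le.1
    filter_upwards [key, AEEqFun.coeFn_one (μ := P) (β := ℝ), AEEqFun.coeFn_neg η] with ω h h1 h2
    refine h2.le.trans (le_trans ?_ h1.ge)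
    have := h.1
    simp only [Pi.neg_apply, Pi.one_apply]
    linarith

theorem union_mem {Ω : Type*} [MeasurableSpace Ω] (P : Measure Ω)
    {E : Type*} [AddCommGroup E] [Module (Ω →ₘ[P] ℝ) E] {U : Set E}
    (hccp : HasCCP P U) (h0 : (0 : E) ∈ U) (u : E) (A : ℕ → Set Ω)
    (hA : ∀ n, MeasurableSet (A n)) (hAU : ∀ n, ind P (A n) • u ∈ U) :
    ind P (⋃ n, A n) • u ∈ U := by
  have hUm : MeasurableSet (⋃ n, A n) := MeasurableSet.iUnion hA
  let B : ℕ → Set Ω := fun n => Nat.casesOn n (⋃ n, A n)ᶜ (fun n => disjointed A n)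
  let x : ℕ → E := fun n => Nat.casesOn n 0 (fun n => ind P (A n) • u)
  have hD : ∀ n, MeasurableSet (disjointed A n) := fun n => MeasurableSet.disjointed hA n
  have hDA : ∀ n, disjointed A n ⊆ A n := fun n => disjointed_subset A n
  have hDU : ∀ n, disjointed A n ⊆ ⋃ n, A n := fun n => (hDA n).trans (subset_iUnion A n)
  have hB : IsMeasPartition B := by
    refine ⟨?_, ?_, ?_⟩
    · rintro (_ | n)
      · exact hUm.compl
      · exact hD n
    · rintro (_ | m) (_ | n) hmn
      · exact absurd rfl hmn
      · exact disjoint_compl_left.mono_right (hDU n)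
      · exact disjoint_compl_right.mono_left (hDU m)
      · exact disjoint_disjointed A (fun h => hmn (by rw [h]))
    · apply eq_univ_of_forall
      intro ω
      by_cases h : ω ∈ ⋃ n, A n
      · rw [← iUnion_disjointed] at h
        obtain ⟨n, hn⟩ := mem_iUnion.1 h
        exact mem_iUnion.2 ⟨n + 1, hn⟩
      · exact mem_iUnion.2 ⟨0, h⟩
  refine (hccp x ?_ B hB).2 _ ?_
  · rintro (_ | n)
    · exact h0
    · exact hAU n
  · rintro (_ | n)
    · show ind P (⋃ n, A n)ᶜ • _ = ind P (⋃ n, A n)ᶜ • (0 : E)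
      rw [smul_smul, ind_mul_ind P hUm.compl hUm, compl_inter_self, ind_empty, zero_smul, smul_zero]
    · show ind P (disjointed A n) • _ = ind P (disjointed A n) • (ind P (A n) • u)
      rw [smul_smul, smul_smul, ind_mul_ind P (hD n) hUm, ind_mul_ind P (hD n) (hA n),
        inter_eq_left.2 (hDA n), inter_eq_left.2 (hDU n)]

theorem mem_of_gauge_le {Ω : Type*} [MeasurableSpace Ω] (P : Measure Ω) [IsProbabilityMeasure P]
    {E : Type*} [AddCommGroup E] [Module (Ω →ₘ[P] ℝ) E] {U : Set E}
    (hbal : IsL0Balanced P U) (hccp : HasCCP P U) (h0 : (0 : E) ∈ U) (u : E) (p : Ω →ₘ[P] ℝ)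
    (hp : IsGLB {ξ : Ω →ₘ[P] ℝ | ξ ∈ Lpos P ∧ u ∈ ξ • U} p)
    (hle : p ≤ AEEqFun.const Ω (1 / 2 : ℝ)) : u ∈ U := by
  let C : Set (Set Ω) := {A | MeasurableSet A ∧ ind P A • u ∈ U}
  have hC0 : (∅ : Set Ω) ∈ C := ⟨MeasurableSet.empty, by rw [ind_empty, zero_smul]; exact h0⟩
  have hCU : ∀ A : ℕ → Set Ω, (∀ n, A n ∈ C) → (⋃ n, A n) ∈ C := fun A hA =>
    ⟨MeasurableSet.iUnion fun n => (hA n).1,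
      union_mem P hccp h0 u A (fun n => (hA n).1) fun n => (hA n).2⟩
  obtain ⟨f, -, hf, hfC⟩ := exists_seq_tendsto_sSup (S := P '' C) ⟨_, _, hC0, rfl⟩
    (OrderTop.bddAbove _)
  choose A hAC hAf using hfC
  set M := ⋃ n, A n with hM
  have hMC : M ∈ C := hCU A hAC
  have hsup : sSup (P '' C) ≤ P M := by
    refine le_of_tendsto' hf fun n => ?_
    rw [← hAf]
    exact measure_mono (subset_iUnion A n)
  have hmax : ∀ D ∈ C, P (D \ M) = 0 := by
    intro D hD
    have h1 : (⋃ n, (fun n : ℕ => Nat.casesOn n M (fun _ => D) : ℕ → Set Ω) n) ∈ C := by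
      apply hCU
      rintro (_ | n)
      · exact hMC
      · exact hD
    have h2 : M ∪ (D \ M) ⊆ ⋃ n, (fun n : ℕ => Nat.casesOn n M (fun _ => D) : ℕ → Set Ω) n := by
      rintro ω (h | h)
      · exact mem_iUnion.2 ⟨0, h⟩
      · exact mem_iUnion.2 ⟨1, h.1⟩
    have h3 : P M + P (D \ M) ≤ P M := by
      rw [← measure_union disjoint_sdiff_right (hD.1.diff hMC.1)]
      exact (measure_mono h2).trans ((le_sSup (mem_image_of_mem P h1)).trans hsup)
    by_contra hne
    exact absurd h3 (not_le.2 (ENNReal.lt_add_right (measure_ne_top P M) hne))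
  let c : Ω →ₘ[P] ℝ := AEEqFun.const Ω (1 / 2 : ℝ)
  have hc : ∀ᵐ ω ∂P, c ω = 1 / 2 := AEEqFun.coeFn_const Ω (1 / 2 : ℝ)
  let b : Ω →ₘ[P] ℝ := p + c * ind P Mᶜ
  have hb : ∀ᵐ ω ∂P, b ω = p ω + 1 / 2 * Mᶜ.indicator (fun _ => (1 : ℝ)) ω := by
    filter_upwards [AEEqFun.coeFn_add p (c * ind P Mᶜ), AEEqFun.coeFn_mul c (ind P Mᶜ), hc,
      ind_coe P hMC.1.compl] with ω h1 h2 h3 h4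
    refine h1.trans ?_
    rw [Pi.add_apply, h2, Pi.mul_apply, h3, h4]
  have hbl : b ∈ lowerBounds {ξ : Ω →ₘ[P] ℝ | ξ ∈ Lpos P ∧ u ∈ ξ • U} := by
    rintro ξ hξ
    have hpξ := AEEqFun.coeFn_le.2 (hp.1 hξ)
    have hD := hmax {ω | ξ ω ≤ 1}
      ⟨measurableSet_le ξ.measurable measurable_const, ind_smul_mem P hbal hξ.1 hξ.2⟩
    have hD' : ∀ᵐ ω ∂P, ¬ (ω ∈ {ω | ξ ω ≤ 1} \ M) := measure_eq_zero_iff_ae_notMem.1 hD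
    apply AEEqFun.coeFn_le.1
    filter_upwards [hb, hpξ, hD', hc, AEEqFun.coeFn_le.2 hle] with ω h1 h2 h3 h4 h5
    rw [h1]
    have h5' : p ω ≤ 1 / 2 := h5.trans_eq h4
    by_cases hω : ω ∈ M
    · simpa [hω] using h2
    · have : ¬ ξ ω ≤ 1 := fun h => h3 ⟨h, hω⟩
      simp [hω]
      linarith
  have hbp : b ≤ p := hp.2 hbl
  have hnull : P Mᶜ = 0 := by
    rw [measure_eq_zero_iff_ae_notMem]
    filter_upwards [hb, AEEqFun.coeFn_le.2 hbp] with ω h1 h2 hω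
    rw [h1, indicator_of_mem hω] at h2
    linarith
  have := hMC.2
  rwa [ind_full P hMC.1 hnull, one_smul] at this

/-- Corollary 3.9: if a topological L⁰-module (E, 𝒯) admits a neighborhood base 𝒰 of 0
consisting of L⁰-convex, L⁰-absorbent, L⁰-balanced sets with the countable concatenation
property, then 𝒯 is induced by the family of L⁰-seminorms {p_U : U ∈ 𝒰}. -/
theorem statement17
    {Ω : Type*} [MeasurableSpace Ω] (P : Measure Ω) [IsProbabilityMeasure P]
    {E : Type*} [AddCommGroup E] [Module (Ω →ₘ[P] ℝ) E]
    (T : TopologicalSpace E)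
    (Tc : TopologicalSpace (Ω →ₘ[P] ℝ))
    (hTc : ∀ W : Set (Ω →ₘ[P] ℝ),
      IsOpen[Tc] W ↔ ∀ ξ ∈ W, ∃ ε ∈ Lspos P, ∀ η ∈ ball P ε, ξ + η ∈ W)
    (haddcont : Continuous[@instTopologicalSpaceProd E E T T, T]
      (fun p : E × E => p.1 + p.2))
    (hsmulcont : Continuous[@instTopologicalSpaceProd (Ω →ₘ[P] ℝ) E Tc T, T]
      (fun p : (Ω →ₘ[P] ℝ) × E => p.1 • p.2))
    (𝒰 : Set (Set E))
    (hbase : (@nhds E T 0).HasBasis (· ∈ 𝒰) id)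
    (hconv : ∀ U ∈ 𝒰, IsL0Convex P U)
    (habs : ∀ U ∈ 𝒰, IsL0Absorbent P U)
    (hbal : ∀ U ∈ 𝒰, IsL0Balanced P U)
    (hccp : ∀ U ∈ 𝒰, HasCCP P U)
    (pU : Set E → E → Ω →ₘ[P] ℝ)
    (hpU : ∀ U ∈ 𝒰, ∀ x : E, IsGLB {ξ : Ω →ₘ[P] ℝ | ξ ∈ Lpos P ∧ x ∈ ξ • U} (pU U x)) :
    ∀ V : Set E, IsOpen[T] V ↔
      ∀ y ∈ V, ∃ Qs : Set (E → Ω →ₘ[P] ℝ), Qs.Finite ∧ Qs ⊆ (fun U => pU U) '' 𝒰 ∧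
        ∃ ε ∈ Lspos P, ∀ u : E, (∀ q ∈ Qs, q u ≤ ε) → y + u ∈ V := by
  have hadd : ∀ y : E, Continuous[T, T] (fun x => y + x) := by
    intro y
    exact haddcont.comp (Continuous.prodMk continuous_const continuous_id)
  have hsm : ∀ c : Ω →ₘ[P] ℝ, Continuous[T, T] (fun x : E => c • x) := by
    intro c
    exact hsmulcont.comp (@Continuous.prodMk _ _ _ Tc T T _ _
      (@continuous_const _ _ T Tc _) (@continuous_id _ T))
  intro V
  constructor
  · intro hV y hy
    have h1 : (fun x => y + x) ⁻¹' V ∈ @nhds E T 0 :=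
      (hV.preimage (hadd y)).mem_nhds (by simpa using hy)
    obtain ⟨U, hU, hUV⟩ := hbase.mem_iff.1 h1
    refine ⟨{pU U}, finite_singleton _, ?_, AEEqFun.const Ω (1 / 2 : ℝ), ?_, ?_⟩
    · rintro _ rfl
      exact ⟨U, hU, rfl⟩
    · have h2 : ∀ᵐ ω ∂P, (AEEqFun.const Ω (1 / 2 : ℝ) : Ω →ₘ[P] ℝ) ω = 1 / 2 :=
        AEEqFun.coeFn_const Ω (1 / 2 : ℝ)
      show ∀ᵐ ω ∂P, _
      filter_upwards [h2] with ω h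
      rw [h]
      norm_num
    · intro u hu
      apply hUV
      exact mem_of_gauge_le P (hbal U hU) (hccp U hU) (mem_of_mem_nhds (hbase.mem_of_mem hU))
        u _ (hpU U hU u) (hu _ rfl)
  · intro h
    rw [isOpen_iff_mem_nhds]
    intro y hy
    obtain ⟨Qs, hfin, hsub, ε, hε, hV⟩ := h y hy
    obtain ⟨δ, hδ⟩ := exists_inv P hε
    have h1 : {u : E | ∀ q ∈ Qs, q u ≤ ε} ∈ @nhds E T 0 := by
      have : {u : E | ∀ q ∈ Qs, q u ≤ ε} = ⋂ q ∈ Qs, {u : E | q u ≤ ε} := by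
        ext u; simp
      rw [this, biInter_mem hfin]
      intro q hq
      obtain ⟨U, hU, rfl⟩ := hsub hq
      have h2 : (fun x : E => δ • x) ⁻¹' U ∈ @nhds E T 0 := by
        apply (hsm δ).continuousAt.preimage_mem_nhds
        simp only [smul_zero]
        exact hbase.mem_of_mem hU
      filter_upwards [h2] with u hu
      refine (hpU U hU u).1 ⟨?_, δ • u, hu, ?_⟩
      · apply AEEqFun.coeFn_le.1
        have hε' : ∀ᵐ ω ∂P, 0 < ε ω := hε
        filter_upwards [hε', AEEqFun.coeFn_zero (μ := P) (β := ℝ)] with ω h h0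
        exact h0.le.trans h.le
      · show ε • (δ • u) = u
        rw [smul_smul, hδ, one_smul]
    have h3 : (fun x => -y + x) ⁻¹' {u : E | ∀ q ∈ Qs, q u ≤ ε} ∈ @nhds E T y := by
      apply (hadd (-y)).continuousAt.preimage_mem_nhds
      simpa using h1
    filter_upwards [h3] with x hx
    simpa using hV _ hx
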